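/- The split-plurality SRS R^splitP satisfies NT, WIVIP, and TO; moreover, if |X| ≥ 3, R^splitP satisfies neither slide independence (SI) nor independence of irrelevant coalitions (IIC). -/

import Mathlib

/-!
Social ranking solutions (SRSs).  The set of individuals is a finite type `X`;
coalitions are elements of `Finset X` (so the domain of a power relation is the
whole power set `𝔛 = 2^X`).  A weak order `≿ ∈ ℛ(𝔛)` is encoded as a relation
`r : Finset X → Finset X → Prop` together with (when needed) its list of
equivalence classes `L = [Σ₁, …, Σ_l]` in strictly decreasing order
(`IsClassList r L`).
-/

namespace SocialRanking

variable {X : Type*} [Fintype X] [DecidableEq X]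

/-- A weak order: a reflexive, complete and transitive binary relation. -/
def IsWeakOrder {A : Type*} (r : A → A → Prop) : Prop :=
  Reflexive r ∧ (∀ a b, r a b ∨ r b a) ∧ Transitive r

/-- A social ranking solution maps every weak order on `2^X` to a weak order on `X`. -/
def IsSRS (R : (Finset X → Finset X → Prop) → X → X → Prop) : Prop :=
  ∀ r, IsWeakOrder r → IsWeakOrder (R r)

/-- `IsClassList r L` : `L = [Σ₁, …, Σ_l]` is the list of the equivalence classes of
the weak order `r` on `2^X`, in strictly decreasing order (`≿ : Σ₁ ≻ ⋯ ≻ Σ_l`):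
every class is nonempty, every coalition lies in exactly one class, and
`S ≿ T ↔ i ≤ j` whenever `S ∈ Σᵢ` and `T ∈ Σⱼ` (0-based indices). -/
def IsClassList (r : Finset X → Finset X → Prop) (L : List (Finset (Finset X))) : Prop :=
  (∀ C ∈ L, C.Nonempty) ∧
  (∀ S : Finset X, ∃! i : ℕ, i < L.length ∧ S ∈ L.getD i ∅) ∧
  (∀ i j : ℕ, i < L.length → j < L.length →
    ∀ S ∈ L.getD i ∅, ∀ T ∈ L.getD j ∅, (r S T ↔ i ≤ j))

/-- The asymmetric (strict) part `P` of a relation. -/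
def StrictPart {A : Type*} (p : A → A → Prop) (a b : A) : Prop := p a b ∧ ¬ p b a

/-- The symmetric part `I` (indifference) of a relation. -/
def IndiffPart {A : Type*} (p : A → A → Prop) (a b : A) : Prop := p a b ∧ p b a

/-- The restrictions of `p` and `q` to `{x, y}` coincide. -/
def AgreeOn (p q : X → X → Prop) (x y : X) : Prop :=
  ∀ a ∈ ({x, y} : Set X), ∀ b ∈ ({x, y} : Set X), (p a b ↔ q a b)

/-- `|Δ[x]|` : the number of coalitions in `Δ` containing `x`. -/
def count (Δ : Finset (Finset X)) (x : X) : ℕ := (Δ.filter (fun S => x ∈ S)).card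

/-! ### Independence axioms and further axioms -/

/-- WIVIP: for a dichotomous `≿ : Σ₁ ≻ Σ₂`, any `x ∈ ⋂Σ₁` is socially strictly above
any `y ∉ ⋂Σ₁`. -/
def WIVIP (R : (Finset X → Finset X → Prop) → X → X → Prop) : Prop :=
  ∀ (r : Finset X → Finset X → Prop) (C₁ C₂ : Finset (Finset X)),
    IsClassList r [C₁, C₂] →
    ∀ x y : X, (∀ S ∈ C₁, x ∈ S) → (∃ S ∈ C₁, y ∉ S) →
    StrictPart (R r) x y

/-- IWS (independence from the worst set): if `≿ : Σ₁ ≻ ⋯ ≻ Σ_{l-1} ≻ Σ_l` (`l ≥ 2`)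
and `≿'` is obtained from `≿` by partitioning the worst class `Σ_l` into ordered
classes `Γ₁ ≻' ⋯ ≻' Γ_{l'}`, then `x P_≿ y` implies `x P_≿' y`. -/
def IWS (R : (Finset X → Finset X → Prop) → X → X → Prop) : Prop :=
  ∀ (r r' : Finset X → Finset X → Prop) (L Γ : List (Finset (Finset X)))
    (W : Finset (Finset X)),
    L ≠ [] → IsClassList r (L ++ [W]) → IsClassList r' (L ++ Γ) →
    ∀ x y : X, StrictPart (R r) x y → StrictPart (R r') x y

/-- IBS (independence from the best set): if `≿ : Σ₁ ≻ Σ₂ ≻ ⋯ ≻ Σ_l` (`l ≥ 2`)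
and `≿'` is obtained from `≿` by partitioning the best class `Σ₁` into ordered
classes `Γ₁ ≻' ⋯ ≻' Γ_{l'}`, then `x P_≿ y` implies `x P_≿' y`. -/
def IBS (R : (Finset X → Finset X → Prop) → X → X → Prop) : Prop :=
  ∀ (r r' : Finset X → Finset X → Prop) (B : Finset (Finset X))
    (L Γ : List (Finset (Finset X))),
    L ≠ [] → IsClassList r (B :: L) → IsClassList r' (Γ ++ L) →
    ∀ x y : X, StrictPart (R r) x y → StrictPart (R r') x y

/-- TO (tops-only): two weak orders with the same best equivalence class get the
same social ranking. -/
def TO (R : (Finset X → Finset X → Prop) → X → X → Prop) : Prop :=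
  ∀ (r r' : Finset X → Finset X → Prop) (B : Finset (Finset X))
    (L L' : List (Finset (Finset X))),
    IsClassList r (B :: L) → IsClassList r' (B :: L') → R r = R r'

/-- The class list obtained from `L` by sliding `Δ` out of class `k₁` into class `k₂`
(`Σ_{k₁}` is replaced by `Σ_{k₁} \ Δ` and `Σ_{k₂}` by `Σ_{k₂} ∪ Δ`; if `Δ = Σ_{k₁}`
the emptied class disappears). -/
def slide (L : List (Finset (Finset X))) (k₁ k₂ : ℕ) (Δ : Finset (Finset X)) :
    List (Finset (Finset X)) :=
  ((L.set k₁ ((L.getD k₁ ∅) \ Δ)).set k₂ ((L.getD k₂ ∅) ∪ Δ)).filter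
    (fun C => decide (C ≠ ∅))

/-- SI (slide independence): sliding a proper subfamily `Δ ⊊ Σ_{k₁}` with
`|Δ[x]| = |Δ[y]|` into another class does not change the social ranking on `{x, y}`. -/
def SI (R : (Finset X → Finset X → Prop) → X → X → Prop) : Prop :=
  ∀ (r r' : Finset X → Finset X → Prop) (L : List (Finset (Finset X)))
    (k₁ k₂ : ℕ) (x y : X) (Δ : Finset (Finset X)),
    IsClassList r L → k₁ < L.length → k₂ < L.length →
    Δ ⊂ L.getD k₁ ∅ → count Δ x = count Δ y →
    IsClassList r' (slide L k₁ k₂ Δ) →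
    AgreeOn (R r) (R r') x y

/-- SSI (strong slide independence): as SI, but `Δ ⊆ Σ_{k₁}` may be the whole class
(in which case the class disappears). -/
def SSI (R : (Finset X → Finset X → Prop) → X → X → Prop) : Prop :=
  ∀ (r r' : Finset X → Finset X → Prop) (L : List (Finset (Finset X)))
    (k₁ k₂ : ℕ) (x y : X) (Δ : Finset (Finset X)),
    IsClassList r L → k₁ < L.length → k₂ < L.length →
    Δ ⊆ L.getD k₁ ∅ → count Δ x = count Δ y →
    IsClassList r' (slide L k₁ k₂ Δ) →
    AgreeOn (R r) (R r') x y

/-- Top-SI: the condition of SI restricted to slides out of the best class (`k₁ = 1`,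
i.e. index `0`). -/
def TopSI (R : (Finset X → Finset X → Prop) → X → X → Prop) : Prop :=
  ∀ (r r' : Finset X → Finset X → Prop) (L : List (Finset (Finset X)))
    (k₂ : ℕ) (x y : X) (Δ : Finset (Finset X)),
    IsClassList r L → 0 < L.length → k₂ < L.length →
    Δ ⊂ L.getD 0 ∅ → count Δ x = count Δ y →
    IsClassList r' (slide L 0 k₂ Δ) →
    AgreeOn (R r) (R r') x y

/-- The class list of `≿' : Σ₁ ≻' ⋯ ≻' Σ_{k-1} ≻' Δ ≻' Σ_k \ Δ ≻' ⋯ ≻' Σ_l`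
(empty classes disappear). -/
def inuiList (L : List (Finset (Finset X))) (k : ℕ) (Δ : Finset (Finset X)) :
    List (Finset (Finset X)) :=
  (L.take k ++ [Δ, (L.getD k ∅) \ Δ] ++ L.drop (k + 1)).filter
    (fun C => decide (C ≠ ∅))

/-- INUI (independence of non-unanimous improvements). -/
def INUI (R : (Finset X → Finset X → Prop) → X → X → Prop) : Prop :=
  ∀ (r r' : Finset X → Finset X → Prop) (L : List (Finset (Finset X)))
    (k : ℕ) (Δ : Finset (Finset X)) (x y : X),
    IsClassList r L → k < L.length → Δ ⊆ L.getD k ∅ →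
    (∃ S ∈ Δ, x ∉ S) → (∃ S ∈ Δ, y ∉ S) →
    IsClassList r' (inuiList L k Δ) →
    AgreeOn (R r) (R r') x y

/-- The weak order `≿_π := {(π(S), π(T)) : S ≿ T}` induced by a permutation `π` of `X`. -/
def permRel (π : Equiv.Perm X) (r : Finset X → Finset X → Prop) :
    Finset X → Finset X → Prop :=
  fun A B => r (A.image π.symm) (B.image π.symm)

/-- NT (neutrality). -/
def NT (R : (Finset X → Finset X → Prop) → X → X → Prop) : Prop :=
  ∀ (π : Equiv.Perm X) (r : Finset X → Finset X → Prop), IsWeakOrder r →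
    ∀ x y : X, (R (permRel π r) (π x) (π y) ↔ R r x y)

/-- IIC (independence of irrelevant coalitions). -/
def IIC (R : (Finset X → Finset X → Prop) → X → X → Prop) : Prop :=
  ∀ (r r' : Finset X → Finset X → Prop), IsWeakOrder r → IsWeakOrder r' →
    ∀ x y : X,
      (∀ S : Finset X, x ∉ S → y ∉ S →
        (r (insert x S) (insert y S) ↔ r' (insert x S) (insert y S))) →
      (R r x y ↔ R r' x y)

/-! ### The social ranking solutions -/

/-- `θ_≿(x) = (|Σ₁[x]|, …, |Σ_l[x]|)`. -/
def theta (L : List (Finset (Finset X))) (x : X) : List ℕ := L.map (fun C => count C x)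

/-- The lexicographic order `a ≥^L b` on vectors of naturals. -/
def GeLex (a b : List ℕ) : Prop :=
  a = b ∨ ∃ k < a.length, (∀ j < k, a.getD j 0 = b.getD j 0) ∧ b.getD k 0 < a.getD k 0

/-- The dual lexicographic order `a ≥^DL b` (read from the last coordinate;
fewer appearances in worse classes is better). -/
def GeDualLex (a b : List ℕ) : Prop :=
  a = b ∨ ∃ k < a.length, (∀ j, k < j → a.getD j 0 = b.getD j 0) ∧ a.getD k 0 < b.getD k 0

/-- The lexicographic excellence solution `R^L` : `x R^L_≿ y ↔ θ_≿(x) ≥^L θ_≿(y)`. -/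
def RL (r : Finset X → Finset X → Prop) (x y : X) : Prop :=
  ∀ L, IsClassList r L → GeLex (theta L x) (theta L y)

/-- The dual lexicographic excellence solution `R^DL`. -/
def RDL (r : Finset X → Finset X → Prop) (x y : X) : Prop :=
  ∀ L, IsClassList r L → GeDualLex (theta L x) (theta L y)

/-- Plurality `R^P` : `x R^P_≿ y ↔ |Σ₁[x]| ≥ |Σ₁[y]|`. -/
def RP (r : Finset X → Finset X → Prop) (x y : X) : Prop :=
  ∀ L, IsClassList r L → count (L.getD 0 ∅) y ≤ count (L.getD 0 ∅) x

/-- `e_≿(x)` : the largest `k` such that `x` belongs to every coalition of each of the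
first `k` equivalence classes (`0` if `x ∉ T₁`). -/
def eIIS (L : List (Finset (Finset X))) (x : X) : ℕ :=
  (L.takeWhile (fun C => decide (∀ S ∈ C, x ∈ S))).length

/-- The intersection initial segment rule `R^IIS` : `x R^IIS_≿ y ↔ e_≿(x) ≥ e_≿(y)`. -/
def RIIS (r : Finset X → Finset X → Prop) (x y : X) : Prop :=
  ∀ L, IsClassList r L → eIIS L y ≤ eIIS L x

/-- The constant-`X` rule: everybody is ranked indifferent. -/
def RconstX : (Finset X → Finset X → Prop) → X → X → Prop := fun _ _ _ => True

/-- The split-plurality score `s^split_≿(z) = ∑_{S ∈ Σ₁ : z ∈ S} 1/|S|`. -/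
def splitScore (C : Finset (Finset X)) (z : X) : ℚ :=
  ∑ S ∈ C.filter (fun S => z ∈ S), (1 : ℚ) / (S.card : ℚ)

/-- Split-plurality `R^splitP`. -/
def RsplitP (r : Finset X → Finset X → Prop) (x y : X) : Prop :=
  ∀ L, IsClassList r L → splitScore (L.getD 0 ∅) y ≤ splitScore (L.getD 0 ∅) x

/-- Plurality with tie-breaking by a linear order `t = ▷` :
`x R^{P,▷}_≿ y ↔ (x P^P_≿ y ∨ (x I^P_≿ y ∧ x ▷ y))`. -/
def RPtie (t : X → X → Prop) (r : Finset X → Finset X → Prop) (x y : X) : Prop :=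
  ∀ L, IsClassList r L →
    (count (L.getD 0 ∅) y < count (L.getD 0 ∅) x ∨
      (count (L.getD 0 ∅) x = count (L.getD 0 ∅) y ∧ t x y))


/-!
Split-plurality only looks at the coalitions `S` with `S ≿ T` for all `T`, which gives tops-only;
the score is equivariant under permutations, which gives neutrality; and a member of every best
coalition collects every share `1 / |S|`, which gives WIVIP.

For distinct `x`, `y`, `z`, the coalitions `{x}` and `{y, z}` contribute one membership each to `x`
and `y`, but shares `1` and `1 / 2`. Sliding both out of the best class `{∅, {x}, {y, z}}` therefore
turns a strict preference for `x` into a tie, against slide independence. Removing just `{x}` from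
the best class `{{x}, {y, z}}` reverses the ranking of `x` and `y`, but no comparison of `S ∪ {x}`
with `S ∪ {y}` sees it: only `S = ∅` involves `{x}`, and `{x}` is weakly above `{y}` either way.
-/

section ClassList

omit [Fintype X] [DecidableEq X]

variable {r : Finset X → Finset X → Prop} {L L' : List (Finset (Finset X))}

theorem IsClassList.mem_getD_zero_iff (h : IsClassList r L) (S : Finset X) :
    S ∈ L.getD 0 ∅ ↔ ∀ T, r S T := by
  obtain ⟨nonempty, existsUnique, rel_iff⟩ := h
  obtain ⟨i, ⟨hi, hSi⟩, -⟩ := existsUnique S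
  have length_pos : 0 < L.length := i.zero_le.trans_lt hi
  constructor
  · intro hS T
    obtain ⟨j, ⟨hj, hTj⟩, -⟩ := existsUnique T
    exact (rel_iff 0 j length_pos hj S hS T hTj).2 j.zero_le
  · intro hS
    have best_mem : L.getD 0 ∅ ∈ L := by
      rw [List.getD_eq_getElem _ _ length_pos]
      exact List.getElem_mem length_pos
    obtain ⟨T, hT⟩ := nonempty _ best_mem
    have hi_zero : i ≤ 0 := (rel_iff i 0 hi length_pos S hSi T hT).1 (hS T)
    rwa [Nat.le_zero.1 hi_zero] at hSi

theorem IsClassList.getD_zero_eq (h : IsClassList r L) (h' : IsClassList r L') :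
    L.getD 0 ∅ = L'.getD 0 ∅ := by
  ext S
  rw [h.mem_getD_zero_iff, h'.mem_getD_zero_iff]

end ClassList

section SplitPlurality

omit [Fintype X]

variable {r : Finset X → Finset X → Prop}

theorem rsplitP_iff {L : List (Finset (Finset X))} (h : IsClassList r L) (x y : X) :
    RsplitP r x y ↔ splitScore (L.getD 0 ∅) y ≤ splitScore (L.getD 0 ∅) x :=
  ⟨fun H => H L h, fun H _ h' => h'.getD_zero_eq h ▸ H⟩

theorem to_rsplitP : TO (X := X) RsplitP := by
  intro r r' B L L' h h'
  ext x y
  rw [rsplitP_iff h, rsplitP_iff h', List.getD_cons_zero, List.getD_cons_zero]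

theorem splitScore_eq_sum_ite (C : Finset (Finset X)) (z : X) :
    splitScore C z = ∑ S ∈ C, if z ∈ S then 1 / (S.card : ℚ) else 0 :=
  Finset.sum_filter _ _

theorem splitScore_insert_empty (C : Finset (Finset X)) (z : X) :
    splitScore (insert ∅ C) z = splitScore C z := by
  simp [splitScore, Finset.filter_insert]

theorem splitScore_lt_splitScore {C : Finset (Finset X)} {x y : X} (hx : ∀ S ∈ C, x ∈ S)
    (hy : ∃ S ∈ C, y ∉ S) : splitScore C y < splitScore C x := by
  obtain ⟨S, hS, hyS⟩ := hy
  have card_pos : 0 < S.card := Finset.card_pos.2 ⟨x, hx S hS⟩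
  unfold splitScore
  rw [Finset.filter_true_of_mem hx]
  exact Finset.sum_lt_sum_of_subset (Finset.filter_subset _ _) hS (by simp [hyS])
    (by positivity) (fun _ _ _ => by positivity)

theorem wivip_rsplitP : WIVIP (X := X) RsplitP := by
  intro r C₁ C₂ h x y hx hy
  have score_lt : splitScore C₁ y < splitScore C₁ x := splitScore_lt_splitScore hx hy
  exact ⟨(rsplitP_iff h x y).2 score_lt.le, fun hyx => score_lt.not_ge ((rsplitP_iff h y x).1 hyx)⟩

open scoped Pointwise

theorem permRel_iff_inv_smul (π : Equiv.Perm X) (S T : Finset X) :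
    permRel π r S T ↔ r (π⁻¹ • S) (π⁻¹ • T) :=
  Iff.rfl

theorem permRel_inv_permRel (π : Equiv.Perm X) : permRel π⁻¹ (permRel π r) = r := by
  ext S T
  simp only [permRel_iff_inv_smul, inv_inv, inv_smul_smul]

theorem getD_map_smul (π : Equiv.Perm X) (L : List (Finset (Finset X))) (i : ℕ) :
    (L.map (π • ·)).getD i ∅ = π • L.getD i ∅ := by
  simpa only [Finset.smul_finset_empty] using L.getD_map ∅ (n := i) (π • ·)

theorem IsClassList.permRel {L : List (Finset (Finset X))} (h : IsClassList r L)
    (π : Equiv.Perm X) : IsClassList (permRel π r) (L.map (π • ·)) := by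
  obtain ⟨nonempty, existsUnique, rel_iff⟩ := h
  refine ⟨?_, fun S => ?_, fun i j hi hj S hS T hT => ?_⟩
  · simpa only [List.forall_mem_map, Finset.smul_finset_nonempty] using nonempty
  · simpa only [List.length_map, getD_map_smul, Finset.inv_smul_mem_iff]
      using existsUnique (π⁻¹ • S)
  · rw [List.length_map] at hi hj
    rw [getD_map_smul, ← Finset.inv_smul_mem_iff] at hS hT
    exact rel_iff i j hi hj _ hS _ hT

theorem splitScore_smul (π : Equiv.Perm X) (C : Finset (Finset X)) (z : X) :
    splitScore (π • C) (π z) = splitScore C z := by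
  rw [← Equiv.Perm.smul_def, splitScore_eq_sum_ite, splitScore_eq_sum_ite, Finset.smul_finset_def,
    Finset.sum_image (MulAction.injective π).injOn]
  simp only [Finset.smul_mem_smul_finset_iff, Finset.card_smul_finset]

theorem rsplitP_of_permRel {π : Equiv.Perm X} {x y : X}
    (h : RsplitP (permRel π r) (π x) (π y)) : RsplitP r x y := by
  intro L hL
  simpa only [getD_map_smul, splitScore_smul] using h _ (hL.permRel π)

theorem nt_rsplitP : NT (X := X) RsplitP := by
  intro π r _ x y
  refine ⟨rsplitP_of_permRel, fun h => rsplitP_of_permRel (π := π⁻¹) ?_⟩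
  simpa only [permRel_inv_permRel, Equiv.Perm.coe_inv, Equiv.symm_apply_apply] using h

end SplitPlurality

section Dichotomous

/-- The weak order on `A` whose best class is `C` and whose worst class is the complement of `C`:
`a` is weakly above `b` unless `b` is in `C` and `a` is not. If `C` or its complement is empty,
there is only one class. -/
def dichotomous {A : Type*} (C : Finset A) (a b : A) : Prop := b ∈ C → a ∈ C

theorem isWeakOrder_dichotomous {A : Type*} (C : Finset A) : IsWeakOrder (dichotomous C) := by
  refine ⟨fun _ => id, fun a b => ?_, fun _ _ _ hab hbc hc => hab (hbc hc)⟩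
  simp only [dichotomous]
  tauto

variable {C Δ : Finset (Finset X)}

theorem isClassList_dichotomous (hC : C.Nonempty) (hC' : Cᶜ.Nonempty) :
    IsClassList (dichotomous C) [C, Cᶜ] := by
  refine ⟨by simp [hC, hC'], fun S => ?_, fun i j hi hj S hS T hT => ?_⟩
  · refine ⟨if S ∈ C then 0 else 1, by split_ifs <;> simp_all, ?_⟩
    rintro i ⟨hi, hSi⟩
    simp only [List.length_cons, List.length_nil] at hi
    interval_cases i <;> simp_all
  · simp only [List.length_cons, List.length_nil] at hi hj
    interval_cases i <;> interval_cases j <;> simp_all [dichotomous]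

theorem rsplitP_dichotomous_iff (hC : C.Nonempty) (hC' : Cᶜ.Nonempty) (x y : X) :
    RsplitP (dichotomous C) x y ↔ splitScore C y ≤ splitScore C x :=
  rsplitP_iff (isClassList_dichotomous hC hC') x y

theorem slide_best_to_worst (hΔ : Δ ⊂ C) (hC' : Cᶜ.Nonempty) :
    slide [C, Cᶜ] 0 1 Δ = [C \ Δ, (C \ Δ)ᶜ] := by
  have best_ne : C \ Δ ≠ ∅ := (Finset.sdiff_nonempty.2 hΔ.2).ne_empty
  have worst_eq : Cᶜ ∪ Δ = (C \ Δ)ᶜ := by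
    rw [sdiff_eq, compl_inf, compl_compl, Finset.sup_eq_union]
  have worst_ne : (C \ Δ)ᶜ ≠ ∅ := worst_eq ▸ (hC'.mono Finset.subset_union_left).ne_empty
  simp [slide, worst_eq, best_ne, worst_ne]

theorem SI.splitScore_le_iff (hSI : SI (X := X) RsplitP) (hΔ : Δ ⊂ C) (hC' : Cᶜ.Nonempty)
    {x y : X} (hcount : count Δ x = count Δ y) :
    splitScore C y ≤ splitScore C x ↔ splitScore (C \ Δ) y ≤ splitScore (C \ Δ) x := by
  have hD : (C \ Δ).Nonempty := Finset.sdiff_nonempty.2 hΔ.2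
  have hC : C.Nonempty := hD.mono Finset.sdiff_subset
  have hD' : (C \ Δ)ᶜ.Nonempty := hC'.mono (Finset.compl_subset_compl.2 Finset.sdiff_subset)
  have hslide : IsClassList (dichotomous (C \ Δ)) (slide [C, Cᶜ] 0 1 Δ) :=
    slide_best_to_worst hΔ hC' ▸ isClassList_dichotomous hD hD'
  rw [← rsplitP_dichotomous_iff hC hC', ← rsplitP_dichotomous_iff hD hD']
  exact hSI _ _ _ 0 1 x y Δ (isClassList_dichotomous hC hC') (by simp) (by simp) hΔ hcount hslide
    x (by simp) y (by simp)

end Dichotomous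

section Counterexamples

omit [Fintype X]

variable {x y z : X}

theorem splitScore_singleton_pair_left (hxy : x ≠ y) (hxz : x ≠ z) :
    splitScore {{x}, {y, z}} x = 1 := by
  simp [splitScore, Finset.filter_insert, Finset.filter_singleton, hxy, hxz]

theorem splitScore_singleton_pair_right (hxy : x ≠ y) (hyz : y ≠ z) :
    splitScore {{x}, {y, z}} y = 1 / 2 := by
  simp [splitScore, Finset.filter_insert, Finset.filter_singleton, hxy.symm,
    Finset.card_pair hyz]

theorem count_singleton_pair (hxy : x ≠ y) (hxz : x ≠ z) :
    count {{x}, {y, z}} x = count {{x}, {y, z}} y := by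
  simp [count, Finset.filter_insert, Finset.filter_singleton, hxy, hxz, hxy.symm]

theorem empty_notMem_singleton_pair : ∅ ∉ ({{x}, {y, z}} : Finset (Finset X)) := by
  simp [eq_comm (a := (∅ : Finset X))]

theorem singleton_notMem_singleton_pair (hxy : x ≠ y) (hyz : y ≠ z) :
    {y} ∉ ({{x}, {y, z}} : Finset (Finset X)) := by
  have pair_ne : ({y, z} : Finset X) ≠ {y} :=
    ne_of_mem_of_not_mem' (a := z) (by simp) (by simpa using hyz.symm)
  simp [hxy.symm, pair_ne.symm]

theorem not_si_rsplitP [Finite X] (hxy : x ≠ y) (hxz : x ≠ z) (hyz : y ≠ z) :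
    ¬ SI (X := X) RsplitP := by
  intro hSI
  have := Fintype.ofFinite X
  have hC' : (insert ∅ {{x}, {y, z}} : Finset (Finset X))ᶜ.Nonempty :=
    ⟨{y}, by simpa using singleton_notMem_singleton_pair hxy hyz⟩
  have score_le_iff := hSI.splitScore_le_iff (Finset.ssubset_insert empty_notMem_singleton_pair) hC'
    (count_singleton_pair hxy hxz).symm
  rw [Finset.insert_sdiff_cancel empty_notMem_singleton_pair, splitScore_insert_empty,
    splitScore_insert_empty, splitScore_singleton_pair_left hxy hxz,
    splitScore_singleton_pair_right hxy hyz] at score_le_iff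
  have tie : splitScore {∅} x ≤ splitScore {∅} y := by
    simp [splitScore, Finset.filter_singleton]
  exact absurd (score_le_iff.2 tie) (by norm_num)

theorem dichotomous_insert_insert_iff (hxy : x ≠ y) (hxz : x ≠ z) (hyz : y ≠ z) (S : Finset X) :
    dichotomous {{x}, {y, z}} (insert x S) (insert y S) ↔
      dichotomous {{y, z}} (insert x S) (insert y S) := by
  have insert_y_ne : insert y S ≠ {x} :=
    ne_of_mem_of_not_mem' (Finset.mem_insert_self y S) (by simpa using hxy.symm)
  have insert_x_ne (h : insert y S = {y, z}) : insert x S ≠ {x} := by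
    have hzS : z ∈ S := Finset.mem_of_mem_insert_of_ne (h ▸ by simp) hyz.symm
    exact ne_of_mem_of_not_mem' (Finset.mem_insert_of_mem hzS) (by simpa using hxz.symm)
  simp only [dichotomous, Finset.mem_insert, Finset.mem_singleton]
  tauto

theorem not_iic_rsplitP [Finite X] (hxy : x ≠ y) (hxz : x ≠ z) (hyz : y ≠ z) :
    ¬ IIC (X := X) RsplitP := by
  intro hIIC
  have := Fintype.ofFinite X
  have ranking_iff :
      RsplitP (dichotomous {{x}, {y, z}}) x y ↔ RsplitP (dichotomous {{y, z}}) x y :=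
    hIIC _ _ (isWeakOrder_dichotomous _) (isWeakOrder_dichotomous _) x y
      fun S _ _ => dichotomous_insert_insert_iff hxy hxz hyz S
  have hC' : ({{x}, {y, z}} : Finset (Finset X))ᶜ.Nonempty :=
    ⟨∅, Finset.mem_compl.2 empty_notMem_singleton_pair⟩
  have hD' : ({{y, z}} : Finset (Finset X))ᶜ.Nonempty :=
    hC'.mono (Finset.compl_subset_compl.2 (Finset.subset_insert _ _))
  rw [rsplitP_dichotomous_iff (Finset.insert_nonempty _ _) hC',
    rsplitP_dichotomous_iff (Finset.singleton_nonempty _) hD',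
    splitScore_singleton_pair_left hxy hxz, splitScore_singleton_pair_right hxy hyz] at ranking_iff
  have y_above_x : splitScore {{y, z}} x < splitScore {{y, z}} y :=
    splitScore_lt_splitScore (by simp) (by simp [hxy, hxz])
  exact y_above_x.not_ge (ranking_iff.1 (by norm_num))

end Counterexamples

/-- Split-plurality satisfies NT, WIVIP and TO; moreover if `|X| ≥ 3` it satisfies
neither SI nor IIC. -/
theorem splitplurality_props [Nonempty X] :
    (NT (X := X) RsplitP ∧ WIVIP (X := X) RsplitP ∧ TO (X := X) RsplitP) ∧
      (3 ≤ Fintype.card X → ¬ SI (X := X) RsplitP ∧ ¬ IIC (X := X) RsplitP) := by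
  refine ⟨⟨nt_rsplitP, wivip_rsplitP, to_rsplitP⟩, fun hcard => ?_⟩
  obtain ⟨x, y, z, hxy, hxz, hyz⟩ := Fintype.two_lt_card_iff.1 hcard
  exact ⟨not_si_rsplitP hxy hxz hyz, not_iic_rsplitP hxy hxz hyz⟩

end SocialRanking
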